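/- Assume Σ_{k=1}^K c_k ≤ A ω. Let η_c > 0 and let η₀ be a bounded measurable ω-periodic function with inf_x η₀(x) > η_c. Then the rupture time satisfies t_r(η₀) ≤ (1/α) · log( (ω^{−1} ∫₀^ω η₀(x) dx) / η_c ); in particular t_r(η₀) is finite. -/

import Mathlib

open Real MeasureTheory Filter Topology intervalIntegral

/-- One-dimensional Gauss (heat) kernel `G_t(x) = (4πt)^{−1/2} exp(−x²/(4t))`. -/
noncomputable def heatKernel (t x : ℝ) : ℝ :=
  (4 * Real.pi * t) ^ (-(1 : ℝ) / 2) * Real.exp (-x ^ 2 / (4 * t))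

/-- The `ω`-periodized heat kernel `Ĝ_t(x) = Σ_{j ∈ ℤ} G_t(x − jω)`. -/
noncomputable def perHeatKernel (ω t x : ℝ) : ℝ :=
  ∑' j : ℤ, heatKernel t (x - (j : ℝ) * ω)

/-- Mild solution of `η_t = σ η_xx − α η + Σ_{k} c_k δ(x − a_k) − A` with initial data `η₀`:
`(S(t)η₀)(x) = e^{−αt} ∫ G_{σt}(x − y) η₀(y) dy
  + Σ_k c_k ∫₀^t e^{−ατ} Ĝ_{στ}(x − a_k) dτ − A(1 − e^{−αt})/α` for `t > 0`,
and `S(0)η₀ = η₀`. -/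
noncomputable def mildSol (ω σ α A : ℝ) {K : ℕ} (a c : Fin K → ℝ)
    (η₀ : ℝ → ℝ) (t x : ℝ) : ℝ :=
  if t = 0 then η₀ x else
    Real.exp (-(α * t)) * (∫ y : ℝ, heatKernel (σ * t) (x - y) * η₀ y)
      + (∑ k : Fin K, c k * ∫ τ in (0:ℝ)..t,
          Real.exp (-(α * τ)) * perHeatKernel ω (σ * τ) (x - a k))
      - A * (1 - Real.exp (-(α * t))) / α

/-- Rupture time for the threshold `η_c`:
`t_r(η₀) = sup{ t ≥ 0 : inf_x (S(t)η₀)(x) > η_c }`. -/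
noncomputable def ruptureTime (ω σ α A : ℝ) {K : ℕ} (a c : Fin K → ℝ)
    (ηc : ℝ) (η₀ : ℝ → ℝ) : ℝ :=
  sSup {t : ℝ | 0 ≤ t ∧ ηc < ⨅ x : ℝ, mildSol ω σ α A a c η₀ t x}

/-!
Integrate over one period. Convolution with the heat kernel preserves the integral of a periodic
function, and the periodized heat kernel has mass one, so the unit source at `a_k` contributes
`∫₀ᵗ e^{−ατ} dτ = (1 − e^{−αt})/α` wherever it sits. Hence
`∫₀^ω S(t)η₀ = e^{−αt} ∫₀^ω η₀ + (Σ c_k − Aω)(1 − e^{−αt})/α ≤ e^{−αt} ∫₀^ω η₀`.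
If `inf S(t)η₀ > η_c`, the left side is at least `η_c ω`, and taking logarithms bounds `t`.
-/

open Function
open scoped Convolution

section Periodic

variable {E : Type*} [NormedAddCommGroup E] {T : ℝ} {f : ℝ → E}

lemma aestronglyMeasurable_of_periodic (hT : 0 < T) (hper : Periodic f T)
    (hf : IntervalIntegrable f volume 0 T) : AEStronglyMeasurable f := by
  rw [← Measure.restrict_univ (μ := volume), ← iUnion_Ioc_add_zsmul hT 0,
    aestronglyMeasurable_iUnion_iff]
  exact fun j => (hper.intervalIntegrable₀ hT.ne' hf _ _).1.aestronglyMeasurable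

lemma intervalIntegrable_comp_sub_of_periodic (hT : T ≠ 0) (hper : Periodic f T)
    (hf : IntervalIntegrable f volume 0 T) (y : ℝ) :
    IntervalIntegrable (fun x => f (x - y)) volume 0 T := by
  simpa using (hper.intervalIntegrable₀ hT hf (0 - y) (T - y)).comp_sub_right y

lemma intervalIntegral_comp_sub_of_periodic [NormedSpace ℝ E] (hper : Periodic f T) (y : ℝ) :
    ∫ x in (0 : ℝ)..T, f (x - y) = ∫ x in (0 : ℝ)..T, f x := by
  rw [intervalIntegral.integral_comp_sub_right]
  simpa [sub_eq_neg_add] using hper.intervalIntegral_add_eq (-y) 0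

end Periodic

section Periodization

lemma periodic_tsum_comp_sub_int_mul {M : Type*} [AddCommMonoid M] [TopologicalSpace M]
    (f : ℝ → M) (T : ℝ) : Periodic (fun x => ∑' j : ℤ, f (x - j * T)) T := fun x => by
  dsimp only
  rw [← (Equiv.addRight (1 : ℤ)).tsum_eq]
  refine tsum_congr fun j => congrArg f ?_
  rw [Equiv.coe_addRight]
  push_cast
  ring

variable {E : Type*} [NormedAddCommGroup E] [NormedSpace ℝ E] {T : ℝ} {f : ℝ → E}

lemma hasSum_intervalIntegral_comp_sub_int_mul (hT : 0 < T) (hf : Integrable f) :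
    HasSum (fun j : ℤ => ∫ x in (0 : ℝ)..T, f (x - j * T)) (∫ x, f x) := by
  have hcover : HasSum (fun j : ℤ => ∫ x in Set.Ioc (j • T) ((j + 1) • T), f x) (∫ x, f x) := by
    simpa only [zero_add, iUnion_Ioc_zsmul hT, setIntegral_univ] using
      hasSum_integral_iUnion (fun _ => measurableSet_Ioc)
        (Set.pairwise_disjoint_Ioc_add_zsmul 0 T) hf.integrableOn
  have htranslate (j : ℤ) : ∫ x in (0 : ℝ)..T, f (x - j * T) =
      ∫ x in Set.Ioc ((-j) • T) ((-j + 1) • T), f x := by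
    rw [integral_comp_sub_right, integral_of_le (by linarith)]
    congr 3 <;> push_cast [zsmul_eq_mul] <;> ring
  simp only [htranslate]
  exact (Equiv.neg ℤ).hasSum_iff.2 hcover

lemma intervalIntegral_tsum_comp_sub_int_mul (hT : 0 < T) (hf : Integrable f) :
    ∫ x in (0 : ℝ)..T, ∑' j : ℤ, f (x - j * T) = ∫ x, f x := by
  have hterm (j : ℤ) : Integrable (fun x => f (x - j * T)) (volume.restrict (Set.Ioc 0 T)) :=
    (hf.comp_sub_right _).integrableOn
  have hnorm := (hasSum_intervalIntegral_comp_sub_int_mul hT hf.norm).summable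
  have hsum := hasSum_intervalIntegral_comp_sub_int_mul hT hf
  simp only [integral_of_le hT.le] at hnorm hsum ⊢
  exact (hasSum_integral_of_summable_integral_norm hterm hnorm).unique hsum

end Periodization

section Convolution

variable {E E' F : Type*} [NormedAddCommGroup E] [NormedSpace ℝ E]
  [NormedAddCommGroup E'] [NormedSpace ℝ E'] [NormedAddCommGroup F] [NormedSpace ℝ F]
  {T : ℝ} {g : ℝ → E} {f : ℝ → E'}

lemma integrable_convolution_integrand_of_periodic (L : E →L[ℝ] E' →L[ℝ] F) (hT : 0 < T)
    (hg : Integrable g) (hper : Periodic f T) (hf : IntervalIntegrable f volume 0 T) :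
    Integrable (fun p : ℝ × ℝ => L (g p.2) (f (p.1 - p.2)))
      ((volume.restrict (Set.Ioc 0 T)).prod volume) := by
  have hmeas : AEStronglyMeasurable (fun p : ℝ × ℝ => L (g p.2) (f (p.1 - p.2)))
      ((volume.restrict (Set.Ioc 0 T)).prod volume) :=
    (hg.aestronglyMeasurable.convolution_integrand L
      (aestronglyMeasurable_of_periodic hT hper hf)).mono_measure
        (Measure.prod_mono Measure.restrict_le_self le_rfl)
  have htranslate (y : ℝ) : IntegrableOn (fun x => f (x - y)) (Set.Ioc 0 T) :=
    (intervalIntegrable_comp_sub_of_periodic hT.ne' hper hf y).1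
  have hnorm (y : ℝ) : ∫ x in Set.Ioc 0 T, ‖f (x - y)‖ = ∫ x in (0 : ℝ)..T, ‖f x‖ := by
    rw [← integral_of_le hT.le]
    exact intervalIntegral_comp_sub_of_periodic (f := fun x => ‖f x‖) (hper.comp norm) y
  refine (integrable_prod_iff' hmeas).2
    ⟨ae_of_all _ fun y => (L (g y)).integrable_comp (htranslate y), ?_⟩
  have hdom : Integrable fun y => ‖L‖ * ‖g y‖ * ∫ x in (0 : ℝ)..T, ‖f x‖ :=
    (hg.norm.const_mul _).mul_const _
  refine hdom.mono' hmeas.norm.prod_swap.integral_prod_right' (ae_of_all _ fun y => ?_)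
  rw [Real.norm_of_nonneg (integral_nonneg fun _ => norm_nonneg _), ← hnorm y,
    ← MeasureTheory.integral_const_mul]
  exact integral_mono_of_nonneg (ae_of_all _ fun _ => norm_nonneg _)
    ((htranslate y).norm.const_mul _) (ae_of_all _ fun x => L.le_opNorm₂ _ _)

lemma intervalIntegrable_convolution_of_periodic (L : E →L[ℝ] E' →L[ℝ] F) (hT : 0 < T)
    (hg : Integrable g) (hper : Periodic f T) (hf : IntervalIntegrable f volume 0 T) :
    IntervalIntegrable (g ⋆[L] f) volume 0 T :=
  (intervalIntegrable_iff_integrableOn_Ioc_of_le hT.le).2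
    (integrable_convolution_integrand_of_periodic L hT hg hper hf).integral_prod_left

lemma intervalIntegral_convolution_of_periodic [CompleteSpace E] [CompleteSpace E']
    [CompleteSpace F] (L : E →L[ℝ] E' →L[ℝ] F) (hT : 0 < T)
    (hg : Integrable g) (hper : Periodic f T) (hf : IntervalIntegrable f volume 0 T) :
    ∫ x in (0 : ℝ)..T, (g ⋆[L] f) x = L (∫ y, g y) (∫ x in (0 : ℝ)..T, f x) :=
  calc ∫ x in (0 : ℝ)..T, (g ⋆[L] f) x
      = ∫ y, ∫ x in (0 : ℝ)..T, L (g y) (f (x - y)) := by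
        simp only [integral_of_le hT.le, convolution_def]
        exact integral_integral_swap (integrable_convolution_integrand_of_periodic L hT hg hper hf)
    _ = ∫ y, L.flip (∫ x in (0 : ℝ)..T, f x) (g y) := by
        simp only [(L (g _)).intervalIntegral_comp_comm
          (intervalIntegrable_comp_sub_of_periodic hT.ne' hper hf _),
          intervalIntegral_comp_sub_of_periodic hper, ContinuousLinearMap.flip_apply]
    _ = L (∫ y, g y) (∫ x in (0 : ℝ)..T, f x) := (L.flip _).integral_comp_comm hg

end Convolution

section HeatKernel

lemma heatKernel_eq_gaussianPDFReal {t : ℝ} (ht : 0 ≤ t) :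
    heatKernel t = ProbabilityTheory.gaussianPDFReal 0 (2 * t).toNNReal := by
  ext x
  rw [heatKernel, ProbabilityTheory.gaussianPDFReal, Real.coe_toNNReal _ (by positivity), neg_div,
    Real.rpow_neg (by positivity), ← Real.sqrt_eq_rpow]
  ring_nf

lemma measurable_uncurry_heatKernel : Measurable (uncurry heatKernel) := by
  unfold heatKernel
  fun_prop

lemma heatKernel_nonneg {t : ℝ} (ht : 0 ≤ t) (x : ℝ) : 0 ≤ heatKernel t x := by
  unfold heatKernel
  positivity

lemma integrable_heatKernel {t : ℝ} (ht : 0 ≤ t) : Integrable (heatKernel t) := by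
  rw [heatKernel_eq_gaussianPDFReal ht]
  exact ProbabilityTheory.integrable_gaussianPDFReal _ _

lemma integral_heatKernel {t : ℝ} (ht : 0 < t) : ∫ x, heatKernel t x = 1 := by
  rw [heatKernel_eq_gaussianPDFReal ht.le]
  exact ProbabilityTheory.integral_gaussianPDFReal_eq_one 0 (by simpa)

lemma measurable_uncurry_perHeatKernel (ω : ℝ) : Measurable (uncurry (perHeatKernel ω)) :=
  Measurable.tsum fun j => measurable_uncurry_heatKernel.comp
    (measurable_fst.prodMk (measurable_snd.sub_const (j * ω)))

lemma perHeatKernel_nonneg (ω : ℝ) {t : ℝ} (ht : 0 ≤ t) (x : ℝ) : 0 ≤ perHeatKernel ω t x :=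
  tsum_nonneg fun _ => heatKernel_nonneg ht _

lemma periodic_perHeatKernel (ω t : ℝ) : Periodic (perHeatKernel ω t) ω :=
  periodic_tsum_comp_sub_int_mul (heatKernel t) ω

variable {ω t : ℝ}

lemma intervalIntegral_perHeatKernel (hω : 0 < ω) (ht : 0 < t) :
    ∫ x in (0 : ℝ)..ω, perHeatKernel ω t x = 1 :=
  (intervalIntegral_tsum_comp_sub_int_mul hω (integrable_heatKernel ht.le)).trans
    (integral_heatKernel ht)

lemma intervalIntegrable_perHeatKernel (hω : 0 < ω) (ht : 0 < t) :
    IntervalIntegrable (perHeatKernel ω t) volume 0 ω :=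
  intervalIntegrable_of_integral_ne_zero <| by
    rw [intervalIntegral_perHeatKernel hω ht]
    exact one_ne_zero

lemma intervalIntegral_heatKernel_convolution (hω : 0 < ω) (ht : 0 < t) {f : ℝ → ℝ}
    (hper : Periodic f ω) (hf : IntervalIntegrable f volume 0 ω) :
    ∫ x in (0 : ℝ)..ω, (heatKernel t ⋆[ContinuousLinearMap.mul ℝ ℝ] f) x =
      ∫ x in (0 : ℝ)..ω, f x := by
  rw [intervalIntegral_convolution_of_periodic _ hω (integrable_heatKernel ht.le) hper hf,
    integral_heatKernel ht, ContinuousLinearMap.mul_apply', one_mul]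

end HeatKernel

section PointSource

/-- The solution at time `t` of `η_t = σ η_xx − α η + δ(x)` on the circle of length `ω` with zero
initial data, written by Duhamel's formula. -/
noncomputable def pointSourceResponse (ω σ α t x : ℝ) : ℝ :=
  ∫ τ in (0 : ℝ)..t, rexp (-(α * τ)) * perHeatKernel ω (σ * τ) x

lemma periodic_pointSourceResponse (ω σ α t : ℝ) : Periodic (pointSourceResponse ω σ α t) ω :=
  fun x => by simp only [pointSourceResponse, periodic_perHeatKernel ω _ x]

variable {ω σ t : ℝ}

lemma integrable_mul_perHeatKernel_prod (hω : 0 < ω) (hσ : 0 < σ) {w : ℝ → ℝ}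
    (hw : IntegrableOn w (Set.Ioc 0 t)) :
    Integrable (fun p : ℝ × ℝ => w p.1 * perHeatKernel ω (σ * p.1) p.2)
      ((volume.restrict (Set.Ioc 0 t)).prod (volume.restrict (Set.Ioc 0 ω))) := by
  have hmeas : AEStronglyMeasurable (fun p : ℝ × ℝ => w p.1 * perHeatKernel ω (σ * p.1) p.2)
      ((volume.restrict (Set.Ioc 0 t)).prod (volume.restrict (Set.Ioc 0 ω))) :=
    hw.aestronglyMeasurable.comp_fst.mul ((measurable_uncurry_perHeatKernel ω).comp
      ((measurable_fst.const_mul σ).prodMk measurable_snd)).aestronglyMeasurable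
  refine (integrable_prod_iff hmeas).2 ⟨?_, hw.norm.congr ?_⟩
  · filter_upwards [ae_restrict_mem measurableSet_Ioc] with τ hτ
    exact (intervalIntegrable_perHeatKernel hω (mul_pos hσ hτ.1)).1.const_mul _
  · filter_upwards [ae_restrict_mem measurableSet_Ioc] with τ hτ
    have hστ : 0 < σ * τ := mul_pos hσ hτ.1
    simp only [norm_mul, Real.norm_of_nonneg (perHeatKernel_nonneg ω hστ.le _)]
    rw [MeasureTheory.integral_const_mul, ← integral_of_le hω.le,
      intervalIntegral_perHeatKernel hω hστ, mul_one]

lemma intervalIntegral_intervalIntegral_mul_perHeatKernel (hω : 0 < ω) (hσ : 0 < σ) (ht : 0 ≤ t)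
    {w : ℝ → ℝ} (hw : IntegrableOn w (Set.Ioc 0 t)) :
    ∫ x in (0 : ℝ)..ω, ∫ τ in (0 : ℝ)..t, w τ * perHeatKernel ω (σ * τ) x =
      ∫ τ in (0 : ℝ)..t, w τ := by
  simp only [integral_of_le ht, integral_of_le hω.le]
  rw [← integral_integral_swap (integrable_mul_perHeatKernel_prod hω hσ hw)]
  refine setIntegral_congr_fun measurableSet_Ioc fun τ hτ => ?_
  rw [MeasureTheory.integral_const_mul, ← integral_of_le hω.le,
    intervalIntegral_perHeatKernel hω (mul_pos hσ hτ.1), mul_one]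

lemma integrableOn_exp_neg_mul (α t : ℝ) :
    IntegrableOn (fun τ => rexp (-(α * τ))) (Set.Ioc 0 t) :=
  Continuous.integrableOn_Ioc (by fun_prop)

lemma intervalIntegral_exp_neg_mul {α : ℝ} (hα : α ≠ 0) (t : ℝ) :
    ∫ τ in (0 : ℝ)..t, rexp (-(α * τ)) = (1 - rexp (-(α * t))) / α := by
  simp only [← neg_mul]
  rw [integral_comp_mul_left rexp (neg_ne_zero.2 hα), integral_exp, mul_zero, Real.exp_zero,
    smul_eq_mul]
  field_simp
  ring

lemma intervalIntegrable_pointSourceResponse (hω : 0 < ω) (hσ : 0 < σ) (α : ℝ) (ht : 0 ≤ t) :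
    IntervalIntegrable (pointSourceResponse ω σ α t) volume 0 ω := by
  refine (intervalIntegrable_iff_integrableOn_Ioc_of_le hω.le).2 ?_
  unfold pointSourceResponse
  simp only [integral_of_le ht]
  exact (integrable_mul_perHeatKernel_prod hω hσ (integrableOn_exp_neg_mul α t)).integral_prod_right

lemma intervalIntegrable_pointSourceResponse_comp_sub (hω : 0 < ω) (hσ : 0 < σ) (α : ℝ)
    (ht : 0 ≤ t) (b : ℝ) :
    IntervalIntegrable (fun x => pointSourceResponse ω σ α t (x - b)) volume 0 ω :=
  intervalIntegrable_comp_sub_of_periodic hω.ne' (periodic_pointSourceResponse ω σ α t)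
    (intervalIntegrable_pointSourceResponse hω hσ α ht) b

lemma intervalIntegral_pointSourceResponse (hω : 0 < ω) (hσ : 0 < σ) {α : ℝ} (hα : α ≠ 0)
    (ht : 0 ≤ t) :
    ∫ x in (0 : ℝ)..ω, pointSourceResponse ω σ α t x = (1 - rexp (-(α * t))) / α :=
  (intervalIntegral_intervalIntegral_mul_perHeatKernel hω hσ ht
    (integrableOn_exp_neg_mul α t)).trans (intervalIntegral_exp_neg_mul hα t)

end PointSource

section MildSolution

lemma mildSol_zero (ω σ α A : ℝ) {K : ℕ} (a c : Fin K → ℝ) (η₀ : ℝ → ℝ) :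
    mildSol ω σ α A a c η₀ 0 = η₀ :=
  funext fun _ => if_pos rfl

lemma mildSol_of_ne_zero (ω σ α A : ℝ) {K : ℕ} (a c : Fin K → ℝ) (η₀ : ℝ → ℝ) {t : ℝ}
    (ht : t ≠ 0) :
    mildSol ω σ α A a c η₀ t = fun x =>
      rexp (-(α * t)) * (heatKernel (σ * t) ⋆[ContinuousLinearMap.mul ℝ ℝ] η₀) x
        + ∑ k, c k * pointSourceResponse ω σ α t (x - a k)
        - A * (1 - rexp (-(α * t))) / α := by
  ext x
  simp only [mildSol, if_neg ht, convolution_mul_swap, pointSourceResponse]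

variable {ω σ α t : ℝ} {K : ℕ} {η₀ : ℝ → ℝ}

lemma intervalIntegrable_sum_pointSourceResponse (a c : Fin K → ℝ) (hω : 0 < ω) (hσ : 0 < σ)
    (α : ℝ) (ht : 0 ≤ t) :
    IntervalIntegrable (fun x => ∑ k, c k * pointSourceResponse ω σ α t (x - a k)) volume 0 ω := by
  simpa only [Finset.sum_fn] using IntervalIntegrable.sum Finset.univ fun k _ =>
    (intervalIntegrable_pointSourceResponse_comp_sub hω hσ α ht (a k)).const_mul (c k)

lemma intervalIntegral_sum_pointSourceResponse (a c : Fin K → ℝ) (hω : 0 < ω) (hσ : 0 < σ)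
    (hα : α ≠ 0) (ht : 0 ≤ t) :
    ∫ x in (0 : ℝ)..ω, ∑ k, c k * pointSourceResponse ω σ α t (x - a k) =
      (∑ k, c k) * ((1 - rexp (-(α * t))) / α) := by
  rw [intervalIntegral.integral_finsetSum fun k _ =>
    (intervalIntegrable_pointSourceResponse_comp_sub hω hσ α ht (a k)).const_mul (c k)]
  simp only [intervalIntegral.integral_const_mul,
    intervalIntegral_comp_sub_of_periodic (periodic_pointSourceResponse ω σ α t),
    intervalIntegral_pointSourceResponse hω hσ hα ht, ← Finset.sum_mul]

lemma intervalIntegrable_mildSol (A : ℝ) (a c : Fin K → ℝ) (hω : 0 < ω) (hσ : 0 < σ) (α : ℝ)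
    (ht : 0 ≤ t) (hper : Periodic η₀ ω) (hη₀ : IntervalIntegrable η₀ volume 0 ω) :
    IntervalIntegrable (mildSol ω σ α A a c η₀ t) volume 0 ω := by
  rcases ht.eq_or_lt with rfl | ht
  · rwa [mildSol_zero]
  rw [mildSol_of_ne_zero _ _ _ _ _ _ _ ht.ne']
  have hfree := intervalIntegrable_convolution_of_periodic (ContinuousLinearMap.mul ℝ ℝ) hω
    (integrable_heatKernel (mul_pos hσ ht).le) hper hη₀
  exact ((hfree.const_mul _).add (intervalIntegrable_sum_pointSourceResponse a c hω hσ α ht.le)).sub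
    intervalIntegrable_const

lemma intervalIntegral_mildSol (A : ℝ) (a c : Fin K → ℝ) (hω : 0 < ω) (hσ : 0 < σ) (hα : α ≠ 0)
    (ht : 0 ≤ t) (hper : Periodic η₀ ω) (hη₀ : IntervalIntegrable η₀ volume 0 ω) :
    ∫ x in (0 : ℝ)..ω, mildSol ω σ α A a c η₀ t x =
      rexp (-(α * t)) * (∫ x in (0 : ℝ)..ω, η₀ x)
        + (∑ k, c k - A * ω) * ((1 - rexp (-(α * t))) / α) := by
  rcases ht.eq_or_lt with rfl | ht
  · simp [mildSol_zero]
  have hfree := (intervalIntegrable_convolution_of_periodic (ContinuousLinearMap.mul ℝ ℝ) hω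
    (integrable_heatKernel (mul_pos hσ ht).le) hper hη₀).const_mul (rexp (-(α * t)))
  have hforced := intervalIntegrable_sum_pointSourceResponse a c hω hσ α ht.le
  rw [mildSol_of_ne_zero _ _ _ _ _ _ _ ht.ne',
    integral_sub (hfree.add hforced) intervalIntegrable_const, integral_add hfree hforced,
    intervalIntegral.integral_const_mul, intervalIntegral.integral_const,
    intervalIntegral_heatKernel_convolution hω (mul_pos hσ ht) hper hη₀,
    intervalIntegral_sum_pointSourceResponse a c hω hσ hα ht.le, smul_eq_mul]
  ring

lemma intervalIntegral_mildSol_le {A : ℝ} (a : Fin K → ℝ) {c : Fin K → ℝ} (hω : 0 < ω)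
    (hσ : 0 < σ) (hα : 0 < α) (hC : ∑ k, c k ≤ A * ω) (ht : 0 ≤ t) (hper : Periodic η₀ ω)
    (hη₀ : IntervalIntegrable η₀ volume 0 ω) :
    ∫ x in (0 : ℝ)..ω, mildSol ω σ α A a c η₀ t x ≤
      rexp (-(α * t)) * ∫ x in (0 : ℝ)..ω, η₀ x := by
  have hdecay : 0 ≤ (1 - rexp (-(α * t))) / α :=
    div_nonneg (sub_nonneg.2 (exp_le_one_iff.2 (neg_nonpos.2 (mul_nonneg hα.le ht)))) hα.le
  rw [intervalIntegral_mildSol A a c hω hσ hα.ne' ht hper hη₀]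
  exact add_le_of_nonpos_right (mul_nonpos_of_nonpos_of_nonneg (sub_nonpos.2 hC) hdecay)

end MildSolution

section RuptureTime

-- A real family that is not bounded below has the junk infimum `0`.
lemma lt_apply_of_lt_iInf_of_nonneg {ι : Sort*} {f : ι → ℝ} {m : ℝ} (hm : 0 ≤ m) (h : m < ⨅ i, f i)
    (i : ι) : m < f i := by
  by_cases hbdd : BddBelow (Set.range f)
  · exact h.trans_le (ciInf_le hbdd i)
  · exact absurd (h.trans_eq (Real.iInf_of_not_bddBelow hbdd)) hm.not_gt

lemma le_one_div_mul_log_of_le_exp_neg_mul {α m M t : ℝ} (hα : 0 < α) (hm : 0 < m)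
    (h : m ≤ rexp (-(α * t)) * M) : t ≤ 1 / α * Real.log (M / m) := by
  have hexp : rexp (α * t) ≤ M / m := by
    rw [Real.exp_neg, inv_mul_eq_div, le_div_iff₀ (exp_pos _)] at h
    rwa [le_div_iff₀' hm]
  rw [one_div, inv_mul_eq_div, le_div_iff₀' hα]
  exact (le_log_iff_exp_le ((exp_pos _).trans_le hexp)).2 hexp

lemma le_one_div_mul_log_of_lt_iInf_mildSol {ω σ α A ηc t : ℝ} {K : ℕ} {a c : Fin K → ℝ}
    {η₀ : ℝ → ℝ} (hω : 0 < ω) (hσ : 0 < σ) (hα : 0 < α) (hC : ∑ k, c k ≤ A * ω)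
    (hηc : 0 < ηc) (hper : Periodic η₀ ω) (hη₀ : IntervalIntegrable η₀ volume 0 ω) (ht : 0 ≤ t)
    (hlt : ηc < ⨅ x, mildSol ω σ α A a c η₀ t x) :
    t ≤ 1 / α * Real.log ((ω⁻¹ * ∫ x in (0 : ℝ)..ω, η₀ x) / ηc) := by
  have hmass : ηc * ω ≤ rexp (-(α * t)) * ∫ x in (0 : ℝ)..ω, η₀ x :=
    calc ηc * ω = ∫ _ in (0 : ℝ)..ω, ηc := by simp [mul_comm]
      _ ≤ ∫ x in (0 : ℝ)..ω, mildSol ω σ α A a c η₀ t x :=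
        integral_mono hω.le intervalIntegrable_const
          (intervalIntegrable_mildSol A a c hω hσ α ht hper hη₀)
          fun x => (lt_apply_of_lt_iInf_of_nonneg hηc.le hlt x).le
      _ ≤ rexp (-(α * t)) * ∫ x in (0 : ℝ)..ω, η₀ x :=
        intervalIntegral_mildSol_le a hω hσ hα hC ht hper hη₀
  refine le_one_div_mul_log_of_le_exp_neg_mul hα hηc ?_
  rwa [mul_left_comm, inv_mul_eq_div, le_div_iff₀ hω]

theorem ruptureTime_le_general (ω σ α A ηc : ℝ) (K : ℕ) (a c : Fin K → ℝ)
    (hω : 0 < ω) (hσ : 0 < σ) (hα : 0 < α)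
    (hC : ∑ k : Fin K, c k ≤ A * ω)
    (hηc : 0 < ηc)
    (η₀ : ℝ → ℝ) (hη₀ : IntervalIntegrable η₀ volume 0 ω) (hper : Periodic η₀ ω)
    (hinf : ηc < ⨅ x : ℝ, η₀ x) :
    ruptureTime ω σ α A a c ηc η₀ ≤
      (1 / α) * Real.log ((ω⁻¹ * ∫ x in (0:ℝ)..ω, η₀ x) / ηc) ∧
    BddAbove {t : ℝ | 0 ≤ t ∧ ηc < ⨅ x : ℝ, mildSol ω σ α A a c η₀ t x} := by
  have hbound : ∀ t ∈ {t : ℝ | 0 ≤ t ∧ ηc < ⨅ x : ℝ, mildSol ω σ α A a c η₀ t x},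
      t ≤ (1 / α) * Real.log ((ω⁻¹ * ∫ x in (0:ℝ)..ω, η₀ x) / ηc) :=
    fun t ⟨ht, hlt⟩ => le_one_div_mul_log_of_lt_iInf_mildSol hω hσ hα hC hηc hper hη₀ ht hlt
  exact ⟨csSup_le ⟨0, le_rfl, by rwa [mildSol_zero]⟩ hbound, _, hbound⟩

end RuptureTime

/-- Proposition 2.3. If `Σ_k c_k ≤ Aω`, `η_c > 0` and `η₀` is a bounded
measurable `ω`-periodic function with `inf η₀ > η_c`, then the rupture time satisfies
`t_r(η₀) ≤ α⁻¹ log((ω⁻¹ ∫₀^ω η₀)/η_c)`; in particular it is finite. -/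
theorem ruptureTime_le (ω σ α A ηc : ℝ) (K : ℕ) (a c : Fin K → ℝ)
    (hω : 0 < ω) (hσ : 0 < σ) (hα : 0 < α)
    (ha0 : ∀ k, 0 ≤ a k) (haω : ∀ k, a k < ω) (hamono : StrictMono a)
    (hC : ∑ k : Fin K, c k ≤ A * ω)
    (hηc : 0 < ηc)
    (η₀ : ℝ → ℝ) (hmeas : Measurable η₀)
    (hbdd : ∃ M, ∀ x, |η₀ x| ≤ M) (hper : ∀ x, η₀ (x + ω) = η₀ x)
    (hinf : ηc < ⨅ x : ℝ, η₀ x) :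
    ruptureTime ω σ α A a c ηc η₀ ≤
      (1 / α) * Real.log ((ω⁻¹ * ∫ x in (0:ℝ)..ω, η₀ x) / ηc) ∧
    BddAbove {t : ℝ | 0 ≤ t ∧ ηc < ⨅ x : ℝ, mildSol ω σ α A a c η₀ t x} := by
  obtain ⟨M, hM⟩ := hbdd
  have hη₀ : IntegrableOn η₀ (Set.Ioc 0 ω) :=
    Measure.integrableOn_of_bounded (by simp) hmeas.aestronglyMeasurable (ae_of_all _ hM)
  exact ruptureTime_le_general ω σ α A ηc K a c hω hσ hα hC hηc η₀
    ((intervalIntegrable_iff_integrableOn_Ioc_of_le hω.le).2 hη₀) hper hinf
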